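/- arXiv:1606.05443 — 2 statements merged into one kernel-verified Lean document; each statement's English description precedes it below -/
import Mathlib

section
/- Let I ⊆ ℝ be an interval, let γ : I → ℂ be a continuous and locally injective curve, and let t0 ∈ I. Then γ is analytic at t0 if and only if for every function f : γ(I) → ℂ the following two conditions are equivalent: (1) f is real analytic at (t0, γ(t0)); (2) f is holomorphically extendable at (t0, γ(t0)). -/
open Set Metric Filter

/-- `γ` is locally injective on `I`: every point of `I` has a relative neighborhood
in `I` on which `γ` is injective. -/
def LocallyInjOn (γ : ℝ → ℂ) (I : Set ℝ) : Prop :=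
  ∀ t ∈ I, ∃ ε > 0, Set.InjOn γ (I ∩ Ioo (t - ε) (t + ε))

/-- The curve `γ : I → ℂ` is analytic at `t0 ∈ I`: there exist an open set `V ⊆ ℂ`
containing `t0`, a `δ > 0` with `(t0−δ, t0+δ) ∩ I ⊆ V`, and an injective holomorphic
function `F : V → ℂ` agreeing with `γ` on `(t0−δ, t0+δ) ∩ I`. -/
def AnalyticCurveAt (γ : ℝ → ℂ) (I : Set ℝ) (t0 : ℝ) : Prop :=
  ∃ (V : Set ℂ) (δ : ℝ) (F : ℂ → ℂ), IsOpen V ∧ (t0 : ℂ) ∈ V ∧ 0 < δ ∧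
    (∀ t ∈ Ioo (t0 - δ) (t0 + δ) ∩ I, (t : ℂ) ∈ V) ∧
    DifferentiableOn ℂ F V ∧ Set.InjOn F V ∧
    ∀ t ∈ Ioo (t0 - δ) (t0 + δ) ∩ I, F (t : ℂ) = γ t

/-- `f : γ(I) → ℂ` is real analytic at `(t0, γ(t0))`: there are `δ > 0` and a power
series `Σ aₙ (t − t0)ⁿ` with radius of convergence `> δ` (witnessed by `ρ > δ` with
`Σ ‖aₙ‖ ρⁿ < ∞`) representing `f ∘ γ` on `(t0−δ, t0+δ) ∩ I`. -/
def RealAnalyticAtCurve (γ : ℝ → ℂ) (I : Set ℝ) (f : ℂ → ℂ) (t0 : ℝ) : Prop :=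
  ∃ (a : ℕ → ℂ) (δ ρ : ℝ), 0 < δ ∧ δ < ρ ∧
    Summable (fun n => ‖a n‖ * ρ ^ n) ∧
    ∀ t ∈ Ioo (t0 - δ) (t0 + δ) ∩ I,
      HasSum (fun n => a n * ((t : ℂ) - (t0 : ℂ)) ^ n) (f (γ t))

/-- `f : γ(I) → ℂ` is holomorphically extendable at `(t0, γ(t0))`: there exist `r > 0`,
`η > 0` and a holomorphic `F` on `D(γ(t0), r)` with `γ((t0−η, t0+η) ∩ I) ⊆ D(γ(t0), r)`
and `F(γ(t)) = f(γ(t))` for `t ∈ (t0−η, t0+η) ∩ I`. -/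
def HolExtAtCurve (γ : ℝ → ℂ) (I : Set ℝ) (f : ℂ → ℂ) (t0 : ℝ) : Prop :=
  ∃ (r η : ℝ) (F : ℂ → ℂ), 0 < r ∧ 0 < η ∧
    DifferentiableOn ℂ F (ball (γ t0) r) ∧
    γ '' (Ioo (t0 - η) (t0 + η) ∩ I) ⊆ ball (γ t0) r ∧
    ∀ t ∈ Ioo (t0 - η) (t0 + η) ∩ I, F (γ t) = f (γ t)

/-!
Say that `φ` is an analytic function of `c` near `t0` if `φ = F ∘ c` near `t0` for some `F` analytic
at `c t0`; this is a preorder on maps defined near `t0`. In these terms `f` is real analytic iff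
`f ∘ γ` is an analytic function of the parameter `t`, `f` is holomorphically extendable iff `f ∘ γ`
is an analytic function of `γ`, and `γ` is an analytic curve iff `γ` and `t` are analytic functions
of each other. Hence the two conditions on `f` agree when `γ` is analytic; conversely, testing
them on `f = id` and on `f = γ⁻¹` yields the two halves of the analyticity of `γ`.
-/

open scoped Topology

section LocalInverse

lemma eventually_deriv_ne_zero_of_not_eventually_eq {𝕜 E : Type*} [NontriviallyNormedField 𝕜]
    [CompleteSpace 𝕜] [CharZero 𝕜] [NormedAddCommGroup E] [NormedSpace 𝕜 E] [CompleteSpace E]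
    {f : 𝕜 → E} {x : 𝕜} (hf : AnalyticAt 𝕜 f x) (hne : ¬ ∀ᶠ z in 𝓝 x, f z = f x) :
    ∀ᶠ z in 𝓝[≠] x, deriv f z ≠ 0 := by
  refine hf.deriv.eventually_eq_zero_or_eventually_ne_zero.resolve_left fun hderiv => hne ?_
  have horder : analyticOrderAt (f · - f x) x = ⊤ := by
    rw [← hf.analyticOrderAt_deriv_add_one, analyticOrderAt_eq_top.2 hderiv, top_add]
  simpa only [sub_eq_zero] using analyticOrderAt_eq_top.1 horder

lemma not_eventually_eq_of_eventually_leftInverse {X Y : Type*} [TopologicalSpace X] {x : X}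
    [(𝓝[≠] x).NeBot] {f : X → Y} {g : Y → X} (hgf : ∀ᶠ z in 𝓝 x, g (f z) = z) :
    ¬ ∀ᶠ z in 𝓝 x, f z = f x := by
  intro hconst
  have hx : ∀ᶠ z in 𝓝[≠] x, z = x := by
    filter_upwards [hgf.filter_mono nhdsWithin_le_nhds, hconst.filter_mono nhdsWithin_le_nhds]
      with z hz hzx
    rw [← hz, hzx, hgf.self_of_nhds]
  obtain ⟨z, hz, hne⟩ := (hx.and self_mem_nhdsWithin).exists
  exact hne hz

lemma continuousAt_of_eventually_leftInverse {X Y : Type*} [TopologicalSpace X]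
    [TopologicalSpace Y] {f : X → Y} {g : Y → X} {x : X} (hopen : 𝓝 (f x) ≤ map f (𝓝 x))
    (hgf : ∀ᶠ z in 𝓝 x, g (f z) = z) : ContinuousAt g (f x) := by
  have hcomp : Tendsto (g ∘ f) (𝓝 x) (𝓝 x) := tendsto_id.congr' (hgf.mono fun _ hz => hz.symm)
  rw [ContinuousAt, hgf.self_of_nhds]
  exact (tendsto_map'_iff.2 hcomp).mono_left hopen

lemma analyticAt_of_eventually_leftInverse {f g : ℂ → ℂ} {z₀ : ℂ} (hf : AnalyticAt ℂ f z₀)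
    (hgf : ∀ᶠ z in 𝓝 z₀, g (f z) = z) : AnalyticAt ℂ g (f z₀) := by
  have hne := not_eventually_eq_of_eventually_leftInverse hgf
  have hopen : 𝓝 (f z₀) ≤ map f (𝓝 z₀) :=
    hf.eventually_constant_or_nhds_le_map_nhds.resolve_left hne
  -- `f'` has no zeros near `z₀` except possibly `z₀` itself, so the singularity of `g` at `f z₀`
  -- is isolated; as `f` is open, `g` is continuous there and the singularity is removable.
  refine Complex.analyticAt_of_differentiable_on_punctured_nhds_of_continuousAt ?_
    (continuousAt_of_eventually_leftInverse hopen hgf)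
  suffices ∀ᶠ z in 𝓝 z₀, f z ≠ f z₀ → DifferentiableAt ℂ g (f z) from
    eventually_nhdsWithin_iff.2 (hopen this)
  have hderiv_ne := eventually_deriv_ne_zero_of_not_eventually_eq hf hne
  filter_upwards [eventually_nhdsWithin_iff.1 hderiv_ne, hf.eventually_analyticAt,
    hgf.eventually_nhds] with z hderiv hfz hgfz hz
  have hcomp : AnalyticAt ℂ (g ∘ f) z := analyticAt_id.congr (hgfz.mono fun _ hw => hw.symm)
  exact ((analyticAt_comp_iff_of_deriv_ne_zero hfz (hderiv (ne_of_apply_ne f hz))).1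
    hcomp).differentiableAt

end LocalInverse

section PowerSeries

variable {𝕜 : Type*} [NontriviallyNormedField 𝕜]

lemma analyticAt_tsum_mul_sub_pow [CompleteSpace 𝕜] {a : ℕ → 𝕜} {ρ : ℝ} (hρ : 0 < ρ)
    (ha : Summable fun n => ‖a n‖ * ρ ^ n) (x : 𝕜) :
    AnalyticAt 𝕜 (fun z => ∑' n, a n * (z - x) ^ n) x := by
  refine HasFPowerSeriesAt.analyticAt (p := .ofScalars 𝕜 a) (hasFPowerSeriesAt_iff'.2 ?_)
  filter_upwards [ball_mem_nhds x hρ] with z hz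
  have hsum : Summable fun n => a n * (z - x) ^ n := by
    refine ha.of_norm_bounded fun n => ?_
    rw [norm_mul, norm_pow]
    gcongr
    exact (mem_ball_iff_norm.1 hz).le
  simpa only [FormalMultilinearSeries.coeff_ofScalars, smul_eq_mul, mul_comm] using hsum.hasSum

lemma exists_summable_eventually_hasSum_mul_sub_pow {f : 𝕜 → 𝕜} {x : 𝕜} (hf : AnalyticAt 𝕜 f x) :
    ∃ (a : ℕ → 𝕜) (ρ : ℝ), 0 < ρ ∧ Summable (fun n => ‖a n‖ * ρ ^ n) ∧
      ∀ᶠ z in 𝓝 x, HasSum (fun n => a n * (z - x) ^ n) (f z) := by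
  obtain ⟨p, hp⟩ := hf
  obtain ⟨ρ, hρ, hρp⟩ := ENNReal.lt_iff_exists_nnreal_btwn.1 hp.radius_pos
  refine ⟨p.coeff, ρ, by simpa only [ENNReal.coe_pos, NNReal.coe_pos] using hρ, ?_, ?_⟩
  · simpa only [p.norm_apply_eq_norm_coef] using p.summable_norm_mul_pow hρp
  · simpa only [smul_eq_mul, mul_comm] using hasFPowerSeriesAt_iff'.1 hp

end PowerSeries

section FactorsAnalytically

variable {𝕜 X E F G : Type*} [NontriviallyNormedField 𝕜] [TopologicalSpace X]
  [NormedAddCommGroup E] [NormedSpace 𝕜 E] [NormedAddCommGroup F] [NormedSpace 𝕜 F]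
  [NormedAddCommGroup G] [NormedSpace 𝕜 G]

variable (𝕜) in
/-- Near `x` within `s`, the map `φ` is an analytic function of `c`: it is `f ∘ c` for some `f`
analytic at `c x`. With `X = ℝ` and `c` either the parameter or the curve `γ`, this expresses each
of the analyticity notions attached to `γ`. -/
def FactorsAnalyticallyWithinAt (φ : X → F) (c : X → E) (s : Set X) (x : X) : Prop :=
  ∃ f : E → F, AnalyticAt 𝕜 f (c x) ∧ ∀ᶠ y in 𝓝[s] x, f (c y) = φ y

namespace FactorsAnalyticallyWithinAt

variable {χ : X → G} {φ : X → F} {c : X → E} {s : Set X} {x : X}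

lemma of_analyticAt {f : E → F} (hf : AnalyticAt 𝕜 f (c x)) :
    FactorsAnalyticallyWithinAt 𝕜 (f ∘ c) c s x :=
  ⟨f, hf, .of_forall fun _ => rfl⟩

lemma trans (hx : x ∈ s) (hχ : FactorsAnalyticallyWithinAt 𝕜 χ φ s x)
    (hφ : FactorsAnalyticallyWithinAt 𝕜 φ c s x) : FactorsAnalyticallyWithinAt 𝕜 χ c s x := by
  obtain ⟨g, hg, hgχ⟩ := hχ
  obtain ⟨f, hf, hfφ⟩ := hφ
  refine ⟨g ∘ f, .comp (by rwa [hfφ.self_of_nhdsWithin hx]) hf, ?_⟩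
  filter_upwards [hgχ, hfφ] with y hgy hfy
  rw [Function.comp_apply, hfy, hgy]

lemma congr_left {φ' : X → F} (h : FactorsAnalyticallyWithinAt 𝕜 φ c s x)
    (hφ : φ =ᶠ[𝓝[s] x] φ') : FactorsAnalyticallyWithinAt 𝕜 φ' c s x := by
  obtain ⟨f, hf, hfφ⟩ := h
  exact ⟨f, hf, EventuallyEq.trans hfφ hφ⟩

lemma continuousWithinAt (h : FactorsAnalyticallyWithinAt 𝕜 φ c s x) (hx : x ∈ s)
    (hc : ContinuousWithinAt c s x) : ContinuousWithinAt φ s x := by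
  obtain ⟨f, hf, hfφ⟩ := h
  exact (hf.continuousAt.comp_continuousWithinAt hc).congr_of_eventuallyEq_of_mem
    (EventuallyEq.symm hfφ) hx

end FactorsAnalyticallyWithinAt

end FactorsAnalytically

section Curve

variable {γ : ℝ → ℂ} {I : Set ℝ} {f : ℂ → ℂ} {t0 : ℝ}

lemma eventually_nhdsWithin_iff_exists_Ioo {s : Set ℝ} {x : ℝ} {p : ℝ → Prop} :
    (∀ᶠ t in 𝓝[s] x, p t) ↔ ∃ δ > 0, ∀ t ∈ Ioo (x - δ) (x + δ) ∩ s, p t := by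
  simp only [eventually_iff, Metric.mem_nhdsWithin_iff, Real.ball_eq_Ioo, Set.subset_def,
    mem_ofPred_eq]

lemma tendsto_ofReal_nhdsWithin : Tendsto ((↑) : ℝ → ℂ) (𝓝[I] t0) (𝓝 t0) :=
  Complex.continuous_ofReal.continuousWithinAt

lemma eventually_eq_of_eventually_eq_ofReal {E : Type*} [NormedAddCommGroup E] [NormedSpace ℂ E]
    {F G : ℂ → E} (hF : AnalyticAt ℂ F t0) (hG : AnalyticAt ℂ G t0) (hI : AccPt t0 (𝓟 I))
    (h : ∀ᶠ t : ℝ in 𝓝[I] t0, F t = G t) : ∀ᶠ z in 𝓝 (t0 : ℂ), F z = G z := by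
  have : (𝓝[I \ {t0}] t0).NeBot := accPt_principal_iff_nhdsWithin.1 hI
  have hle : 𝓝[I \ {t0}] t0 ≤ 𝓝[I] t0 := nhdsWithin_mono _ sdiff_subset
  have hofReal : Tendsto ((↑) : ℝ → ℂ) (𝓝[I \ {t0}] t0) (𝓝[≠] (t0 : ℂ)) :=
    tendsto_nhdsWithin_iff.2 ⟨tendsto_ofReal_nhdsWithin,
      eventually_mem_nhdsWithin.mono fun _ ht => Complex.ofReal_injective.ne ht.2⟩
  exact (hF.frequently_eq_iff_eventually_eq hG).1
    (hofReal.frequently (h.filter_mono hle).frequently)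

lemma realAnalyticAtCurve_iff_factorsAnalyticallyWithinAt :
    RealAnalyticAtCurve γ I f t0 ↔ FactorsAnalyticallyWithinAt ℂ (f ∘ γ) ((↑) : ℝ → ℂ) I t0 := by
  constructor
  · rintro ⟨a, δ, ρ, hδ, hδρ, ha, hsum⟩
    exact ⟨_, analyticAt_tsum_mul_sub_pow (hδ.trans hδρ) ha t0,
      eventually_nhdsWithin_iff_exists_Ioo.2 ⟨δ, hδ, fun t ht => (hsum t ht).tsum_eq⟩⟩
  · rintro ⟨g, hg, hgf⟩
    obtain ⟨a, ρ, hρ, ha, hsum⟩ := exists_summable_eventually_hasSum_mul_sub_pow hg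
    obtain ⟨δ, hδ, h⟩ := eventually_nhdsWithin_iff_exists_Ioo.1
      (hgf.and (tendsto_ofReal_nhdsWithin.eventually hsum))
    refine ⟨a, min δ (ρ / 2), ρ, lt_min hδ (half_pos hρ),
      (min_le_right _ _).trans_lt (half_lt_self hρ), ha, fun t ht => ?_⟩
    have hsubset : Ioo (t0 - min δ (ρ / 2)) (t0 + min δ (ρ / 2)) ⊆ Ioo (t0 - δ) (t0 + δ) := by
      gcongr <;> exact min_le_left _ _
    obtain ⟨hgt, hsumt⟩ := h t ⟨hsubset ht.1, ht.2⟩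
    rwa [hgt] at hsumt

lemma HolExtAtCurve.factorsAnalyticallyWithinAt (h : HolExtAtCurve γ I f t0) :
    FactorsAnalyticallyWithinAt ℂ (f ∘ γ) γ I t0 := by
  obtain ⟨r, η, F, hr, hη, hF, -, hFf⟩ := h
  exact ⟨F, hF.analyticAt (ball_mem_nhds _ hr), eventually_nhdsWithin_iff_exists_Ioo.2 ⟨η, hη, hFf⟩⟩

lemma holExtAtCurve_iff_factorsAnalyticallyWithinAt (hγ : ContinuousWithinAt γ I t0) :
    HolExtAtCurve γ I f t0 ↔ FactorsAnalyticallyWithinAt ℂ (f ∘ γ) γ I t0 := by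
  refine ⟨HolExtAtCurve.factorsAnalyticallyWithinAt, fun ⟨F, hF, hFf⟩ => ?_⟩
  obtain ⟨r, hr, hFr⟩ := Metric.eventually_nhds_iff_ball.1 hF.eventually_analyticAt
  obtain ⟨η, hη, h⟩ := eventually_nhdsWithin_iff_exists_Ioo.1
    (hFf.and (hγ.eventually (ball_mem_nhds _ hr)))
  exact ⟨r, η, F, hr, hη, fun z hz => (hFr z hz).differentiableAt.differentiableWithinAt,
    image_subset_iff.2 fun t ht => (h t ht).2, fun t ht => (h t ht).1⟩

lemma HolExtAtCurve.of_differentiable {F : ℂ → ℂ} (h : HolExtAtCurve γ I f t0)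
    (hF : Differentiable ℂ F) : HolExtAtCurve γ I F t0 := by
  obtain ⟨r, η, -, hr, hη, -, himage, -⟩ := h
  exact ⟨r, η, F, hr, hη, hF.differentiableOn, himage, fun _ _ => rfl⟩

lemma analyticCurveAt_iff_exists_analyticAt_injOn : AnalyticCurveAt γ I t0 ↔
    ∃ F : ℂ → ℂ, AnalyticAt ℂ F t0 ∧ (∃ U ∈ 𝓝 (t0 : ℂ), InjOn F U) ∧
      ∀ᶠ t : ℝ in 𝓝[I] t0, F t = γ t := by
  constructor
  · rintro ⟨V, δ, F, hVopen, ht0V, hδ, -, hF, hinj, hFγ⟩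
    have hV := hVopen.mem_nhds ht0V
    exact ⟨F, hF.analyticAt hV, ⟨V, hV, hinj⟩,
      eventually_nhdsWithin_iff_exists_Ioo.2 ⟨δ, hδ, hFγ⟩⟩
  · rintro ⟨F, hF, ⟨U, hU, hinj⟩, hFγ⟩
    obtain ⟨r, hr, hball⟩ :=
      Metric.eventually_nhds_iff_ball.1 (hF.eventually_analyticAt.and hU)
    obtain ⟨δ, hδ, h⟩ := eventually_nhdsWithin_iff_exists_Ioo.1
      (hFγ.and (tendsto_ofReal_nhdsWithin.eventually (ball_mem_nhds _ hr)))
    exact ⟨ball t0 r, δ, F, isOpen_ball, mem_ball_self hr, hδ, fun t ht => (h t ht).2,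
      fun z hz => (hball z hz).1.differentiableAt.differentiableWithinAt,
      hinj.mono fun z hz => (hball z hz).2, fun t ht => (h t ht).1⟩

lemma analyticCurveAt_of_not_accPt (hI : ¬ AccPt t0 (𝓟 I)) : AnalyticCurveAt γ I t0 := by
  refine analyticCurveAt_iff_exists_analyticAt_injOn.2 ⟨(· + (γ t0 - t0)), by fun_prop,
    ⟨univ, univ_mem, (add_left_injective _).injOn⟩, ?_⟩
  have heq : ∀ᶠ t in 𝓝 t0, ¬ (t ≠ t0 ∧ t ∈ I) := by
    rwa [accPt_iff_frequently, not_frequently] at hI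
  filter_upwards [heq.filter_mono nhdsWithin_le_nhds, self_mem_nhdsWithin] with t ht htI
  obtain rfl : t = t0 := of_not_not fun hne => ht ⟨hne, htI⟩
  exact add_sub_cancel _ _

lemma analyticCurveAt_iff_factorsAnalyticallyWithinAt (ht0 : t0 ∈ I) :
    AnalyticCurveAt γ I t0 ↔ FactorsAnalyticallyWithinAt ℂ γ ((↑) : ℝ → ℂ) I t0 ∧
      FactorsAnalyticallyWithinAt ℂ ((↑) : ℝ → ℂ) γ I t0 := by
  constructor
  · intro h
    obtain ⟨F, hF, ⟨U, hU, hinj⟩, hFγ⟩ := analyticCurveAt_iff_exists_analyticAt_injOn.1 h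
    have hleft : ∀ᶠ z in 𝓝 (t0 : ℂ), Function.invFunOn F U (F z) = z :=
      mem_of_superset hU hinj.leftInvOn_invFunOn
    refine ⟨⟨F, hF, hFγ⟩, Function.invFunOn F U, ?_, ?_⟩
    · rw [← hFγ.self_of_nhdsWithin ht0]
      exact analyticAt_of_eventually_leftInverse hF hleft
    · filter_upwards [hFγ, tendsto_ofReal_nhdsWithin.eventually hleft] with t hFt ht
      rw [← hFt, ht]
  · rintro ⟨⟨F, hF, hFγ⟩, G, hG, hGγ⟩
    by_cases hI : AccPt t0 (𝓟 I)
    · rw [← hFγ.self_of_nhdsWithin ht0] at hG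
      have hGF : ∀ᶠ z in 𝓝 (t0 : ℂ), (G ∘ F) z = id z := by
        refine eventually_eq_of_eventually_eq_ofReal (hG.comp hF) analyticAt_id hI ?_
        filter_upwards [hFγ, hGγ] with t hFt hGt
        rw [Function.comp_apply, hFt, hGt, id]
      have hinj : InjOn F {z | (G ∘ F) z = id z} := LeftInvOn.injOn fun _ hz => hz
      exact analyticCurveAt_iff_exists_analyticAt_injOn.2 ⟨F, hF, ⟨_, hGF, hinj⟩, hFγ⟩
    · exact analyticCurveAt_of_not_accPt hI

lemma continuousWithinAt_of_forall_realAnalytic_iff_holExt (ht0 : t0 ∈ I)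
    (h : ∀ f, RealAnalyticAtCurve γ I f t0 ↔ HolExtAtCurve γ I f t0) :
    ContinuousWithinAt γ I t0 := by
  -- Extendability of `0` only says that `γ` is bounded near `t0`; then `id` is extendable as well.
  have hzero : HolExtAtCurve γ I 0 t0 :=
    (h 0).1 (realAnalyticAtCurve_iff_factorsAnalyticallyWithinAt.2
      (.of_analyticAt (f := 0) analyticAt_const))
  have hγ : RealAnalyticAtCurve γ I id t0 := (h id).2 (hzero.of_differentiable differentiable_id)
  exact (realAnalyticAtCurve_iff_factorsAnalyticallyWithinAt.1 hγ).continuousWithinAt ht0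
    tendsto_ofReal_nhdsWithin

theorem analyticCurveAt_iff_forall_realAnalytic_iff_holExt_general (ht0 : t0 ∈ I)
    (hinj : ∃ U ∈ 𝓝[I] t0, InjOn γ U) :
    AnalyticCurveAt γ I t0 ↔
      ∀ f : ℂ → ℂ, (RealAnalyticAtCurve γ I f t0 ↔ HolExtAtCurve γ I f t0) := by
  rw [analyticCurveAt_iff_factorsAnalyticallyWithinAt ht0]
  constructor
  · rintro ⟨hγ, hofReal⟩ f
    rw [realAnalyticAtCurve_iff_factorsAnalyticallyWithinAt,
      holExtAtCurve_iff_factorsAnalyticallyWithinAt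
        (hγ.continuousWithinAt ht0 tendsto_ofReal_nhdsWithin)]
    exact ⟨fun hf => hf.trans ht0 hofReal, fun hf => hf.trans ht0 hγ⟩
  · intro h
    have hcont := continuousWithinAt_of_forall_realAnalytic_iff_holExt ht0 h
    simp only [realAnalyticAtCurve_iff_factorsAnalyticallyWithinAt,
      holExtAtCurve_iff_factorsAnalyticallyWithinAt hcont] at h
    obtain ⟨U, hU, hinjU⟩ := hinj
    have hparam : (fun z => ((Function.invFunOn γ U z : ℝ) : ℂ)) ∘ γ =ᶠ[𝓝[I] t0] ((↑) : ℝ → ℂ) :=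
      mem_of_superset hU fun t ht => congrArg _ (hinjU.leftInvOn_invFunOn ht)
    refine ⟨(h id).2 (.of_analyticAt analyticAt_id), ((h _).1 ?_).congr_left hparam⟩
    exact FactorsAnalyticallyWithinAt.congr_left (.of_analyticAt analyticAt_id) hparam.symm

end Curve

/-- Let `γ : I → ℂ` be a continuous, locally injective curve on an interval `I ⊆ ℝ`
and `t0 ∈ I`. Then `γ` is analytic at `t0` iff for every function `f : γ(I) → ℂ`,
real analyticity of `f` at `(t0, γ(t0))` is equivalent to holomorphic extendability
of `f` at `(t0, γ(t0))`. -/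
theorem analyticCurveAt_iff_forall_realAnalytic_iff_holExt
    (I : Set ℝ) (hI : I.OrdConnected) (γ : ℝ → ℂ)
    (hcont : ContinuousOn γ I) (hinj : LocallyInjOn γ I)
    (t0 : ℝ) (ht0 : t0 ∈ I) :
    AnalyticCurveAt γ I t0 ↔
      ∀ f : ℂ → ℂ, (RealAnalyticAtCurve γ I f t0 ↔ HolExtAtCurve γ I f t0) := by
  obtain ⟨ε, hε, hinjε⟩ := hinj t0 ht0
  exact analyticCurveAt_iff_forall_realAnalytic_iff_holExt_general ht0
    ⟨_, inter_mem_nhdsWithin I (Ioo_mem_nhds (sub_lt_self _ hε) (lt_add_of_pos_right _ hε)), hinjε⟩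
end

section
/- Let L be a closed subset of ℂ. Then the following are equivalent: (i) for every compact set M ⊆ L, every function f : ℂ → ℂ which is continuous on ℂ, holomorphic on ℂ∖M, and has a finite limit at infinity, is constant (i.e. the continuous analytic capacity a(L) is zero); (ii) for every open set U ⊆ ℂ, every function f which is continuous on U and holomorphic on U∖L is holomorphic on U. -/
open Filter

/-!
Let `f` be continuous on `U` and holomorphic on `U \ L`, and let `φ` be a cut-off supported in `U`
and equal to `1` near a point `a` of `U`. Vitushkin's localization `V_φ f = φ f - C(f ∂φ/∂z̄)`, with
`C` the Cauchy transform, is continuous and tends to `0` at infinity. As `∂(C h)/∂z̄ = h`, we have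
`∂(V_φ f)/∂z̄ = φ ∂f/∂z̄`, so that `V_φ f` is holomorphic off the compact set `L ∩ supp φ`; and
`f - V_φ f = C(f ∂φ/∂z̄)` near `a`, which is holomorphic there because `∂φ/∂z̄ = 0` near `a`. If
`a(L) = 0` then `V_φ f` is constant, hence `f` is holomorphic at `a`. The converse is Liouville's
theorem.

The equation `∂(C h)/∂z̄ = h` comes from the Cauchy–Pompeiu formula for compactly supported
functions, which is read off in polar coordinates: the radial part of `∂v/∂z̄` integrates to a
multiple of `v 0` along each ray, the angular part to `0` around each circle.
-/

open Complex ContinuousLinearMap Function MeasureTheory Metric Set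
open scoped ComplexConjugate Convolution Real Topology

section Cutoff

theorem contDiff_of_tsupport {𝕜 V F : Type*} [NontriviallyNormedField 𝕜] [NormedAddCommGroup V]
    [NormedSpace 𝕜 V] [NormedAddCommGroup F] [NormedSpace 𝕜 F] {n : WithTop ℕ∞} {g : V → F}
    (hg : ∀ x ∈ tsupport g, ContDiffAt 𝕜 n g x) : ContDiff 𝕜 n g := by
  refine contDiff_iff_contDiffAt.2 fun x => ?_
  by_cases hx : x ∈ tsupport g
  · exact hg x hx
  · exact contDiffAt_const.congr_of_eventuallyEq (notMem_tsupport_iff_eventuallyEq.1 hx)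

theorem continuous_smul_of_tsupport_subset {X 𝕜 F : Type*} [TopologicalSpace X]
    [TopologicalSpace 𝕜] [TopologicalSpace F] [Zero 𝕜] [Zero F] [SMulWithZero 𝕜 F]
    [ContinuousSMul 𝕜 F] {U : Set X} {φ : X → 𝕜} {f : X → F} (hU : IsOpen U)
    (hφ : Continuous φ) (hf : ContinuousOn f U) (hsub : tsupport φ ⊆ U) :
    Continuous fun x => φ x • f x :=
  continuous_of_tsupport fun _ hx => hφ.continuousAt.smul <|
    hf.continuousAt (hU.mem_nhds (hsub (tsupport_smul_subset_left φ f hx)))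

theorem exists_contDiff_eventuallyEq_one {V : Type*} (𝕜 : Type*) [RCLike 𝕜]
    [NormedAddCommGroup V] [NormedSpace ℝ V] [HasContDiffBump V] [FiniteDimensional ℝ V]
    {U : Set V} {a : V} (hU : U ∈ 𝓝 a) {n : ℕ∞} :
    ∃ φ : V → 𝕜, ContDiff ℝ n φ ∧ HasCompactSupport φ ∧ tsupport φ ⊆ U ∧ φ =ᶠ[𝓝 a] 1 := by
  obtain ⟨r, hr, hball⟩ := nhds_basis_closedBall.mem_iff.1 hU
  let ψ : ContDiffBump a := ⟨r / 2, r, half_pos hr, half_lt_self hr⟩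
  have hsub : tsupport (fun z => (ψ z : 𝕜)) ⊆ tsupport ψ :=
    tsupport_comp_subset RCLike.ofReal_zero ψ
  refine ⟨fun z => (ψ z : 𝕜), (RCLike.ofRealCLM (K := 𝕜)).contDiff.comp ψ.contDiff,
    ψ.hasCompactSupport.of_isClosed_subset (isClosed_tsupport _) hsub,
    hsub.trans (ψ.tsupport_eq.trans_subset hball), ?_⟩
  filter_upwards [ψ.eventuallyEq_one] with z hz
  simp [hz]

end Cutoff

section Dbar

variable {E : Type*} [NormedAddCommGroup E] [NormedSpace ℂ E]

/-- The Cauchy–Riemann operator `∂/∂z̄ = (∂/∂x + i ∂/∂y) / 2`; its value is `0` where `u` is not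
real differentiable. -/
noncomputable def dbar (u : ℂ → E) (z : ℂ) : E :=
  (1 / 2 : ℂ) • (fderiv ℝ u z 1 + I • fderiv ℝ u z I)

theorem differentiableAt_complex_iff_dbar_eq_zero {u : ℂ → E} {a : ℂ} :
    DifferentiableAt ℂ u a ↔ DifferentiableAt ℝ u a ∧ dbar u a = 0 := by
  have I_smul_dbar : (2 * I) • dbar u a = I • fderiv ℝ u a 1 - fderiv ℝ u a I := by
    rw [dbar]
    match_scalars
    · ring
    · linear_combination I_sq
  have two_I_ne : 2 * I ≠ 0 := mul_ne_zero two_ne_zero I_ne_zero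
  rw [differentiableAt_complex_iff_differentiableAt_real, ← smul_eq_zero_iff_right two_I_ne,
    I_smul_dbar, sub_eq_zero, eq_comm (b := I • _)]

theorem conj_smul_dbar (u : ℂ → E) (z e : ℂ) :
    conj e • dbar u z =
      (1 / 2 : ℂ) • (fderiv ℝ u z e + I • fderiv ℝ u z (e * I)) := by
  set D := fderiv ℝ u z with hD
  have apply_eq (w : ℂ) : D w = (w.re : ℂ) • D 1 + (w.im : ℂ) • D I := by
    rw [coe_smul, coe_smul, ← map_smul, ← map_smul, ← map_add, real_smul, real_smul, mul_one,
      re_add_im]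
  have conj_e : conj e = e.re - e.im * I := by simp [Complex.ext_iff]
  rw [dbar, ← hD, apply_eq e, apply_eq (e * I), conj_e]
  simp only [mul_I_re, mul_I_im, ofReal_neg]
  match_scalars
  · ring
  · linear_combination (-e.im / 2 : ℂ) * I_sq

theorem dbar_sub {u v : ℂ → E} {a : ℂ} (hu : DifferentiableAt ℝ u a)
    (hv : DifferentiableAt ℝ v a) : dbar (fun z => u z - v z) a = dbar u a - dbar v a := by
  simp only [dbar, fderiv_fun_sub hu hv, sub_apply]
  module

theorem dbar_smul {φ : ℂ → ℂ} {f : ℂ → E} {a : ℂ} (hφ : DifferentiableAt ℝ φ a)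
    (hf : DifferentiableAt ℝ f a) :
    dbar (fun z => φ z • f z) a = φ a • dbar f a + dbar φ a • f a := by
  simp only [dbar, fderiv_fun_smul hφ hf, add_apply, smul_apply, smulRight_apply, smul_eq_mul]
  module

theorem dbar_const (c : E) : dbar (fun _ => c) = 0 := by
  ext z
  simp [dbar]

theorem dbar_comp_add_right (u : ℂ → E) (z w : ℂ) :
    dbar (fun w => u (w + z)) w = dbar u (w + z) := by
  simp only [dbar, fderiv_comp_add_right]

theorem dbar_eventuallyEq {u v : ℂ → E} {a : ℂ} (h : u =ᶠ[𝓝 a] v) : dbar u =ᶠ[𝓝 a] dbar v := by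
  filter_upwards [h.fderiv (𝕜 := ℝ)] with z hz
  rw [dbar, dbar, hz]

theorem tsupport_dbar_subset (u : ℂ → E) : tsupport (dbar u) ⊆ tsupport u :=
  (tsupport_comp_subset (g := fun D : ℂ →L[ℝ] E => (1 / 2 : ℂ) • (D 1 + I • D I))
    (by simp) (fderiv ℝ u)).trans (tsupport_fderiv_subset ℝ)

theorem hasCompactSupport_dbar {u : ℂ → E} (hu : HasCompactSupport u) :
    HasCompactSupport (dbar u) :=
  hu.of_isClosed_subset (isClosed_tsupport _) (tsupport_dbar_subset u)

theorem contDiffAt_dbar {u : ℂ → E} {a : ℂ} {m n : WithTop ℕ∞} (hu : ContDiffAt ℝ n u a)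
    (hmn : m + 1 ≤ n) : ContDiffAt ℝ m (dbar u) a := by
  have hD := hu.fderiv_right hmn
  exact ((hD.clm_apply contDiffAt_const).add
    ((hD.clm_apply contDiffAt_const).const_smul I)).const_smul (1 / 2 : ℂ)

theorem continuous_dbar {u : ℂ → E} (hu : ContDiff ℝ 1 u) : Continuous (dbar u) :=
  continuous_iff_continuousAt.2 fun _ =>
    (contDiffAt_dbar (m := 0) hu.contDiffAt (zero_add _).le).continuousAt

end Dbar

section CauchyKernel

/-- The fundamental solution `1 / (π z)` of `∂/∂z̄`. -/
noncomputable def cauchyKernel (z : ℂ) : ℂ := (π * z)⁻¹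

theorem norm_cauchyKernel (z : ℂ) : ‖cauchyKernel z‖ = (π * ‖z‖)⁻¹ := by
  rw [cauchyKernel, norm_inv, norm_mul, norm_real, Real.norm_of_nonneg Real.pi_nonneg]

theorem cauchyKernel_neg (z : ℂ) : cauchyKernel (-z) = -cauchyKernel z := by
  rw [cauchyKernel, cauchyKernel, mul_neg, inv_neg]

theorem measurable_cauchyKernel : Measurable cauchyKernel :=
  (measurable_id.const_mul _).inv

theorem locallyIntegrable_cauchyKernel : LocallyIntegrable cauchyKernel := by
  refine locallyIntegrable_of_norm_le_rpow (C := π⁻¹) (α := 1) ?_ ?_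
    (.of_forall fun z => ?_) measurable_cauchyKernel.aestronglyMeasurable
  · simp
  · simp
  · rw [norm_cauchyKernel, mul_inv, Real.rpow_neg_one]

theorem hasDerivAt_cauchyKernel {z : ℂ} (hz : z ≠ 0) :
    HasDerivAt cauchyKernel (-(π * z ^ 2)⁻¹) z := by
  have hderiv := (hasDerivAt_inv hz).const_mul (π : ℂ)⁻¹
  simp only [← mul_inv, mul_neg] at hderiv
  exact hderiv

end CauchyKernel

section Pompeiu

variable {E F : Type*} [NormedAddCommGroup E] [NormedSpace ℂ E]
  [NormedAddCommGroup F] [NormedSpace ℝ F]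

theorem polarCoord_symm_eq_circleMap (p : ℝ × ℝ) :
    Complex.polarCoord.symm p = circleMap 0 p.1 p.2 := by
  rw [Complex.polarCoord_symm_apply, circleMap_zero, exp_mul_I, ofReal_cos, ofReal_sin]

theorem volume_restrict_polarCoord_target :
    volume.restrict polarCoord.target =
      (volume.restrict (Ioi 0)).prod (volume.restrict (Ioo (-π) π)) :=
  (Measure.prod_restrict _ _).symm

theorem circleMap_zero_eq_smul (r θ : ℝ) : circleMap 0 r θ = r • circleMap 0 1 θ := by
  simp [circleMap_zero]

theorem smul_cauchyKernel_circleMap {r : ℝ} (hr : r ≠ 0) (θ : ℝ) :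
    r • cauchyKernel (circleMap 0 r θ) = (π : ℂ)⁻¹ * conj (circleMap 0 1 θ) := by
  have : (r : ℂ) ≠ 0 := ofReal_ne_zero.2 hr
  rw [cauchyKernel, conj_circleMap_zero, mul_inv, circleMap_zero_inv, real_smul]
  simp only [circleMap_zero]
  push_cast
  field_simp

theorem integral_Ioi_fderiv_smul {V : Type*} [NormedAddCommGroup V] [NormedSpace ℝ V]
    [CompleteSpace F] {v : V → F} (hv : ContDiff ℝ 1 v) (hs : HasCompactSupport v) {e : V}
    (he : e ≠ 0) : ∫ r in Ioi (0 : ℝ), fderiv ℝ v (r • e) e = -v 0 := by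
  have hderiv (r : ℝ) : deriv (fun r : ℝ => v (r • e)) r = fderiv ℝ v (r • e) e :=
    ((hv.differentiable one_ne_zero _).hasFDerivAt.comp_hasDerivAt r
      (by simpa using (hasDerivAt_id r).smul_const e)).deriv
  have hcs : HasCompactSupport fun r : ℝ => v (r • e) :=
    hs.comp_isClosedEmbedding (isClosedEmbedding_smul_left he)
  simpa [← hderiv, comp_def] using hcs.integral_Ioi_deriv_eq (hv.comp (by fun_prop)) 0

theorem integral_fderiv_circleMap_tangent [CompleteSpace F] {v : ℂ → F} (hv : ContDiff ℝ 1 v)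
    (c : ℂ) (r : ℝ) :
    ∫ θ in -π..π, fderiv ℝ v (circleMap c r θ) (circleMap 0 r θ * I) = 0 := by
  have hderiv (θ : ℝ) : HasDerivAt (fun θ => v (circleMap c r θ))
      (fderiv ℝ v (circleMap c r θ) (circleMap 0 r θ * I)) θ :=
    (hv.differentiable one_ne_zero _).hasFDerivAt.comp_hasDerivAt θ (hasDerivAt_circleMap c r θ)
  have hcont : Continuous fun θ => fderiv ℝ v (circleMap c r θ) (circleMap 0 r θ * I) :=
    ((hv.continuous_fderiv one_ne_zero).comp (continuous_circleMap c r)).clm_apply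
      ((continuous_circleMap 0 r).mul_const I)
  have hperiod : circleMap c r π = circleMap c r (-π) := by
    rw [← periodic_circleMap c r (-π)]
    ring_nf
  rw [intervalIntegral.integral_eq_sub_of_hasDerivAt (fun θ _ => hderiv θ)
    (hcont.intervalIntegrable _ _), hperiod, sub_self]

theorem integrableOn_polarCoord_target_fderiv_circleMap {v : ℂ → F} (hv : ContDiff ℝ 1 v)
    (hs : HasCompactSupport v) {ξ : ℝ → ℂ} (hξ : Continuous ξ) :
    IntegrableOn (fun p : ℝ × ℝ => fderiv ℝ v (circleMap 0 p.1 p.2) (ξ p.2))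
      polarCoord.target := by
  obtain ⟨R, hR⟩ := (hs.fderiv ℝ).isCompact.isBounded.subset_closedBall 0
  have hcont : Continuous fun p : ℝ × ℝ => fderiv ℝ v (circleMap 0 p.1 p.2) (ξ p.2) := by
    refine ((hv.continuous_fderiv one_ne_zero).comp ?_).clm_apply (hξ.comp continuous_snd)
    simp only [circleMap_zero]
    fun_prop
  refine (hcont.continuousOn.integrableOn_compact (K := Icc 0 R ×ˢ Icc (-π) π)
    (isCompact_Icc.prod isCompact_Icc)).of_forall_sdiff_eq_zero
      polarCoord.open_target.measurableSet ?_
  rintro ⟨r, θ⟩ ⟨⟨hr, hθ⟩, hout⟩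
  have hRr : R < r := not_le.1 fun hrR => hout ⟨⟨le_of_lt hr, hrR⟩, Ioo_subset_Icc_self hθ⟩
  have hnotMem : circleMap 0 r θ ∉ tsupport (fderiv ℝ v) := fun hmem => by
    have := mem_closedBall_zero_iff.1 (hR hmem)
    rw [norm_circleMap_zero, abs_of_pos hr] at this
    exact hRr.not_ge this
  simp only [image_eq_zero_of_notMem_tsupport hnotMem, zero_apply]

theorem setIntegral_polarCoord_target_fderiv_radial [CompleteSpace F] {v : ℂ → F}
    (hv : ContDiff ℝ 1 v) (hs : HasCompactSupport v) :
    ∫ p in polarCoord.target, fderiv ℝ v (circleMap 0 p.1 p.2) (circleMap 0 1 p.2) =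
      -((2 * π) • v 0) := by
  have h_int := integrableOn_polarCoord_target_fderiv_circleMap hv hs (continuous_circleMap 0 1)
  have ray (θ : ℝ) :
      ∫ r in Ioi (0 : ℝ), fderiv ℝ v (circleMap 0 r θ) (circleMap 0 1 θ) = -v 0 := by
    simpa only [← circleMap_zero_eq_smul] using
      integral_Ioi_fderiv_smul hv hs (circleMap_ne_center (c := 0) (θ := θ) one_ne_zero)
  have hpi : -π ≤ π := by linarith [Real.pi_pos]
  rw [IntegrableOn, volume_restrict_polarCoord_target] at h_int
  rw [volume_restrict_polarCoord_target, integral_prod_symm _ h_int]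
  simp only [ray, setIntegral_const, Real.volume_real_Ioo_of_le hpi, smul_neg, sub_neg_eq_add,
    two_mul]

theorem setIntegral_polarCoord_target_fderiv_angular [CompleteSpace F] {v : ℂ → F}
    (hv : ContDiff ℝ 1 v) (hs : HasCompactSupport v) :
    ∫ p in polarCoord.target, fderiv ℝ v (circleMap 0 p.1 p.2) (circleMap 0 1 p.2 * I) = 0 := by
  have h_int := integrableOn_polarCoord_target_fderiv_circleMap hv hs
    ((continuous_circleMap 0 1).mul_const I)
  rw [IntegrableOn, volume_restrict_polarCoord_target] at h_int
  rw [volume_restrict_polarCoord_target, integral_prod _ h_int]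
  refine setIntegral_eq_zero_of_forall_eq_zero fun r hr => ?_
  have circle := integral_fderiv_circleMap_tangent hv 0 r
  simp only [circleMap_zero_eq_smul r, smul_mul_assoc, map_smul,
    intervalIntegral.integral_smul] at circle
  rw [← integral_Ioc_eq_integral_Ioo, ← intervalIntegral.integral_of_le (by linarith [Real.pi_pos])]
  simpa only [circleMap_zero_eq_smul r] using
    (smul_eq_zero_iff_right (ne_of_gt (mem_Ioi.1 hr))).1 circle

theorem integral_cauchyKernel_smul_dbar [CompleteSpace E] {v : ℂ → E} (hv : ContDiff ℝ 1 v)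
    (hs : HasCompactSupport v) : ∫ w, cauchyKernel w • dbar v w = -v 0 := by
  set A : ℝ × ℝ → E := fun p => fderiv ℝ v (circleMap 0 p.1 p.2) (circleMap 0 1 p.2)
  set B : ℝ × ℝ → E := fun p => fderiv ℝ v (circleMap 0 p.1 p.2) (circleMap 0 1 p.2 * I)
  have hA : IntegrableOn A polarCoord.target :=
    integrableOn_polarCoord_target_fderiv_circleMap hv hs (continuous_circleMap 0 1)
  have hB : IntegrableOn B polarCoord.target :=
    integrableOn_polarCoord_target_fderiv_circleMap hv hs ((continuous_circleMap 0 1).mul_const I)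
  have polar (p : ℝ × ℝ) (hp : p ∈ polarCoord.target) :
      p.1 • cauchyKernel (Complex.polarCoord.symm p) • dbar v (Complex.polarCoord.symm p) =
        (2 * π : ℂ)⁻¹ • (A p + I • B p) := by
    rw [polarCoord_symm_eq_circleMap, ← smul_assoc,
      smul_cauchyKernel_circleMap (ne_of_gt (mem_Ioi.1 hp.1)), mul_smul, conj_smul_dbar, smul_smul,
      mul_inv, mul_comm, one_div]
  have two_pi_ne : (2 * π : ℂ) ≠ 0 := mul_ne_zero two_ne_zero (ofReal_ne_zero.2 Real.pi_ne_zero)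
  calc ∫ w, cauchyKernel w • dbar v w
      = ∫ p in polarCoord.target, (2 * π : ℂ)⁻¹ • (A p + I • B p) := by
        rw [← Complex.integral_comp_polarCoord_symm]
        exact setIntegral_congr_fun polarCoord.open_target.measurableSet polar
    _ = (2 * π : ℂ)⁻¹ • (-((2 * π) • v 0) + I • (0 : E)) := by
        rw [integral_smul, integral_add hA (g := fun p => I • B p) (hB.smul I), integral_smul,
          setIntegral_polarCoord_target_fderiv_radial hv hs,
          setIntegral_polarCoord_target_fderiv_angular hv hs]
    _ = -v 0 := by
        rw [smul_zero, add_zero, smul_neg, ← coe_smul, ofReal_mul, ofReal_ofNat,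
          inv_smul_smul₀ two_pi_ne]

end Pompeiu

section CauchyTransform

variable {E : Type*} [NormedAddCommGroup E] [NormedSpace ℂ E]

/-- The Cauchy transform `z ↦ 1/π ∫ h(w) / (z - w) dw`, normalised so as to be a right inverse
of `∂/∂z̄`. -/
noncomputable def cauchyTransform (h : ℂ → E) (z : ℂ) : E :=
  ∫ w, cauchyKernel (z - w) • h w

theorem cauchyTransform_eq_convolution (h : ℂ → E) :
    cauchyTransform h = cauchyKernel ⋆[lsmul ℝ ℂ, volume] h :=
  funext fun _ => (convolution_eq_swap (lsmul ℝ ℂ)).symm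

theorem integrable_cauchyKernel_smul {h : ℂ → E} (hc : Continuous h) (hs : HasCompactSupport h)
    (z : ℂ) : Integrable fun w => cauchyKernel (z - w) • h w :=
  convolutionExistsAt_iff_integrable_swap.1 <|
    hs.convolutionExists_right (lsmul ℝ ℂ) locallyIntegrable_cauchyKernel hc z

theorem continuous_cauchyTransform {h : ℂ → E} (hc : Continuous h) (hs : HasCompactSupport h) :
    Continuous (cauchyTransform h) := by
  rw [cauchyTransform_eq_convolution]
  exact hs.continuous_convolution_right _ locallyIntegrable_cauchyKernel hc

theorem tendsto_cauchyTransform_cocompact {h : ℂ → E} (hi : Integrable h)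
    (hs : HasCompactSupport h) : Tendsto (cauchyTransform h) (cocompact ℂ) (𝓝 0) := by
  obtain ⟨R, hR⟩ := hs.isCompact.isBounded.subset_closedBall 0
  have bound_tendsto :
      Tendsto (fun z : ℂ => (π * (‖z‖ - R))⁻¹ * ∫ w, ‖h w‖) (cocompact ℂ) (𝓝 0) := by
    have : Tendsto (fun z : ℂ => π * (‖z‖ - R)) (cocompact ℂ) atTop :=
      (tendsto_atTop_add_const_right _ (-R) (tendsto_norm_cocompact_atTop (E := ℂ))).const_mul_atTop
        Real.pi_pos
    simpa using this.inv_tendsto_atTop.mul_const (∫ w, ‖h w‖)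
  refine squeeze_zero_norm' ?_ bound_tendsto
  filter_upwards [tendsto_norm_cocompact_atTop.eventually_gt_atTop R] with z hz
  rw [← integral_const_mul]
  refine norm_integral_le_of_norm_le (hi.norm.const_mul _) (.of_forall fun w => ?_)
  by_cases hw : w ∈ tsupport h
  · have hw_norm : ‖w‖ ≤ R := mem_closedBall_zero_iff.1 (hR hw)
    have : 0 < ‖z‖ - R := sub_pos.2 hz
    rw [norm_smul, norm_cauchyKernel]
    gcongr
    linarith [norm_sub_norm_le z w]
  · simp [image_eq_zero_of_notMem_tsupport hw]

theorem exists_le_norm_sub_of_eventuallyEq_zero {V F : Type*} [SeminormedAddCommGroup V] [Zero F]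
    {h : V → F} {a : V} (ha : h =ᶠ[𝓝 a] 0) :
    ∃ r > 0, ∀ z ∈ ball a r, ∀ w, h w ≠ 0 → r ≤ ‖z - w‖ := by
  obtain ⟨r, hr, hball⟩ := Metric.eventually_nhds_iff_ball.1 ha
  refine ⟨r / 2, half_pos hr, fun z hz w hw => ?_⟩
  have hwa : r ≤ dist w a := not_lt.1 fun hlt => hw (hball w hlt)
  rw [mem_ball] at hz
  rw [← dist_eq_norm]
  linarith [dist_triangle_left w a z]

theorem aestronglyMeasurable_cauchyKernel_smul {h : ℂ → E} (hm : AEStronglyMeasurable h) (z : ℂ) :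
    AEStronglyMeasurable fun w => cauchyKernel (z - w) • h w :=
  (measurable_cauchyKernel.comp (measurable_id.const_sub z)).aestronglyMeasurable.smul hm

theorem integrable_cauchyKernel_smul_of_eventuallyEq_zero {h : ℂ → E} {a : ℂ}
    (hi : Integrable h) (ha : h =ᶠ[𝓝 a] 0) :
    Integrable fun w => cauchyKernel (a - w) • h w := by
  obtain ⟨r, hr, far⟩ := exists_le_norm_sub_of_eventuallyEq_zero ha
  refine (hi.norm.const_mul (π * r)⁻¹).mono'
    (aestronglyMeasurable_cauchyKernel_smul hi.aestronglyMeasurable a) (.of_forall fun w => ?_)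
  rcases eq_or_ne (h w) 0 with hw | hw
  · simp [hw]
  rw [norm_smul, norm_cauchyKernel]
  gcongr
  exact far a (mem_ball_self hr) w hw

theorem differentiableAt_cauchyTransform_of_eventuallyEq_zero {h : ℂ → E} {a : ℂ}
    (hi : Integrable h) (ha : h =ᶠ[𝓝 a] 0) : DifferentiableAt ℂ (cauchyTransform h) a := by
  obtain ⟨r, hr, far⟩ := exists_le_norm_sub_of_eventuallyEq_zero ha
  have hm := hi.aestronglyMeasurable
  have deriv_meas : AEStronglyMeasurable fun w => (-(π * (a - w) ^ 2)⁻¹ : ℂ) • h w :=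
    (by fun_prop : Measurable fun w => (-(π * (a - w) ^ 2)⁻¹ : ℂ)).aestronglyMeasurable.smul hm
  refine (hasDerivAt_integral_of_dominated_loc_of_deriv_le
    (F' := fun z w => (-(π * (z - w) ^ 2)⁻¹ : ℂ) • h w)
    (bound := fun w => (π * r ^ 2)⁻¹ * ‖h w‖) (ball_mem_nhds a hr)
    (.of_forall (aestronglyMeasurable_cauchyKernel_smul hm))
    (integrable_cauchyKernel_smul_of_eventuallyEq_zero hi ha) deriv_meas
    (.of_forall fun w z hz => ?_) (hi.norm.const_mul _)
    (.of_forall fun w z hz => ?_)).2.differentiableAt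
  · rcases eq_or_ne (h w) 0 with hw | hw
    · simp [hw]
    rw [norm_smul, norm_neg, norm_inv, norm_mul, norm_pow, norm_real,
      Real.norm_of_nonneg Real.pi_nonneg]
    gcongr
    exact far z hz w hw
  · rcases eq_or_ne (h w) 0 with hw | hw
    · simpa only [hw, smul_zero] using hasDerivAt_const z (0 : E)
    have hzw : z - w ≠ 0 := norm_pos_iff.1 (hr.trans_le (far z hz w hw))
    exact ((hasDerivAt_cauchyKernel hzw).comp_sub_const z w).smul_const (h w)

theorem differentiableAt_cauchyTransform_sub_of_eventuallyEq {h g : ℂ → E} {a : ℂ}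
    (hh : Integrable h) (hg : Continuous g) (hs : HasCompactSupport g) (hhg : h =ᶠ[𝓝 a] g) :
    DifferentiableAt ℂ (fun z => cauchyTransform h z - cauchyTransform g z) a := by
  have hi : Integrable (h - g) := hh.sub (hg.integrable_of_hasCompactSupport hs)
  have hzero : ∀ᶠ z in 𝓝 a, h - g =ᶠ[𝓝 z] 0 :=
    (hhg.mono fun z hz => sub_eq_zero.2 hz : h - g =ᶠ[𝓝 a] 0).eventually_nhds
  refine (differentiableAt_cauchyTransform_of_eventuallyEq_zero hi
    hzero.self_of_nhds).congr_of_eventuallyEq ?_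
  filter_upwards [hzero] with z hz
  rw [sub_eq_iff_eq_add]
  simp only [cauchyTransform]
  rw [← integral_add (integrable_cauchyKernel_smul_of_eventuallyEq_zero hi hz)
    (integrable_cauchyKernel_smul hg hs z)]
  simp only [Pi.sub_apply, smul_sub, sub_add_cancel]

theorem cauchyTransform_dbar [CompleteSpace E] {u : ℂ → E} (hu : ContDiff ℝ 1 u)
    (hs : HasCompactSupport u) (z : ℂ) : cauchyTransform (dbar u) z = u z := by
  have pompeiu := integral_cauchyKernel_smul_dbar (v := fun w => u (w + z))
    (hu.comp (contDiff_id.add contDiff_const)) (hs.comp_homeomorph (Homeomorph.addRight z))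
  simp only [dbar_comp_add_right, zero_add] at pompeiu
  rw [cauchyTransform, ← integral_add_right_eq_self _ z]
  simp only [sub_add_cancel_right, cauchyKernel_neg, neg_smul, integral_neg, pompeiu, neg_neg]

theorem differentiableAt_and_dbar_cauchyTransform_of_contDiff [CompleteSpace E] {h : ℂ → E}
    (hh : ContDiff ℝ 1 h) (hs : HasCompactSupport h) (z : ℂ) :
    DifferentiableAt ℝ (cauchyTransform h) z ∧ dbar (cauchyTransform h) z = h z := by
  have hderiv := hs.hasFDerivAt_convolution_right (lsmul ℝ ℂ) locallyIntegrable_cauchyKernel hh z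
  rw [← cauchyTransform_eq_convolution] at hderiv
  refine ⟨hderiv.differentiableAt, ?_⟩
  have hD : Continuous (fderiv ℝ h) := hh.continuous_fderiv one_ne_zero
  have apply_eq (e : ℂ) : fderiv ℝ (cauchyTransform h) z e =
      ∫ w, cauchyKernel (z - w) • fderiv ℝ h w e := by
    rw [hderiv.fderiv, convolution_precompR_apply _ locallyIntegrable_cauchyKernel (hs.fderiv ℝ) hD,
      ← cauchyTransform_eq_convolution, cauchyTransform]
  have h_int (e : ℂ) : Integrable fun w => cauchyKernel (z - w) • fderiv ℝ h w e :=
    integrable_cauchyKernel_smul (hD.clm_apply continuous_const) (hs.fderiv_apply ℝ e) z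
  calc dbar (cauchyTransform h) z
      = cauchyTransform (dbar h) z := by
        rw [dbar, apply_eq, apply_eq, ← integral_smul,
          ← integral_add (h_int 1) (g := fun w => I • _) ((h_int I).smul I), ← integral_smul]
        simp only [cauchyTransform, dbar, smul_add, smul_comm (cauchyKernel _)]
    _ = h z := cauchyTransform_dbar hh hs z

theorem differentiableAt_and_dbar_cauchyTransform_of_contDiffAt [CompleteSpace E] {h : ℂ → E}
    {a : ℂ} (hi : Integrable h) (ha : ContDiffAt ℝ 1 h a) :
    DifferentiableAt ℝ (cauchyTransform h) a ∧ dbar (cauchyTransform h) a = h a := by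
  obtain ⟨χ, hχ, hχ_supp, hχ_sub, hχ_one⟩ :=
    exists_contDiff_eventuallyEq_one ℂ (ha.eventually (by simp)) (n := 1)
  set g : ℂ → E := fun z => χ z • h z
  have hg_supp : HasCompactSupport g := hχ_supp.smul_right
  have hg : ContDiff ℝ 1 g := contDiff_of_tsupport fun z hz =>
    hχ.contDiffAt.smul (hχ_sub (tsupport_smul_subset_left χ h hz))
  have hhg : h =ᶠ[𝓝 a] g := hχ_one.mono fun z hz => by simp [g, hz]
  obtain ⟨Cg_diff, dbar_Cg⟩ := differentiableAt_and_dbar_cauchyTransform_of_contDiff hg hg_supp a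
  obtain ⟨sub_diff, dbar_sub_eq⟩ := differentiableAt_complex_iff_dbar_eq_zero.1
    (differentiableAt_cauchyTransform_sub_of_eventuallyEq hi hg.continuous hg_supp hhg)
  have Ch_diff : DifferentiableAt ℝ (cauchyTransform h) a := by
    simpa using sub_diff.fun_add Cg_diff
  rw [dbar_sub Ch_diff Cg_diff, sub_eq_zero] at dbar_sub_eq
  exact ⟨Ch_diff, by rw [dbar_sub_eq, dbar_Cg, hhg.eq_of_nhds]⟩

end CauchyTransform

section VitushkinLocalization

variable {E : Type*} [NormedAddCommGroup E] [NormedSpace ℂ E] {φ : ℂ → ℂ} {f : ℂ → E} {U : Set ℂ}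

/-- Vitushkin's localization `V_φ f = φ f - C(f ∂φ/∂z̄)`, which retains the singularities of `f` on
the support of the cut-off `φ` and has no others: `∂(V_φ f)/∂z̄ = φ ∂f/∂z̄`. -/
noncomputable def vitushkinLocalization (φ : ℂ → ℂ) (f : ℂ → E) (z : ℂ) : E :=
  φ z • f z - cauchyTransform (fun w => dbar φ w • f w) z

theorem hasCompactSupport_dbar_smul (hs : HasCompactSupport φ) :
    HasCompactSupport fun w => dbar φ w • f w :=
  (hasCompactSupport_dbar hs).smul_right

theorem continuous_dbar_smul (hU : IsOpen U) (hφ : ContDiff ℝ 1 φ) (hsub : tsupport φ ⊆ U)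
    (hf : ContinuousOn f U) : Continuous fun w => dbar φ w • f w :=
  continuous_smul_of_tsupport_subset hU (continuous_dbar hφ) hf
    ((tsupport_dbar_subset φ).trans hsub)

theorem continuous_vitushkinLocalization (hU : IsOpen U) (hφ : ContDiff ℝ 1 φ)
    (hs : HasCompactSupport φ) (hsub : tsupport φ ⊆ U) (hf : ContinuousOn f U) :
    Continuous (vitushkinLocalization φ f) :=
  (continuous_smul_of_tsupport_subset hU hφ.continuous hf hsub).sub
    (continuous_cauchyTransform (continuous_dbar_smul hU hφ hsub hf)
      (hasCompactSupport_dbar_smul hs))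

theorem tendsto_vitushkinLocalization_cocompact (hs : HasCompactSupport φ)
    (hi : Integrable fun w => dbar φ w • f w) :
    Tendsto (vitushkinLocalization φ f) (cocompact ℂ) (𝓝 0) := by
  have hφf : HasCompactSupport fun z => φ z • f z := hs.smul_right
  unfold vitushkinLocalization
  simpa using hφf.is_zero_at_infty.sub
    (tendsto_cauchyTransform_cocompact hi (hasCompactSupport_dbar_smul hs))

theorem differentiableAt_cauchyTransform_dbar_smul {a c : ℂ}
    (hi : Integrable fun w => dbar φ w • f w) (ha : φ =ᶠ[𝓝 a] fun _ => c) :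
    DifferentiableAt ℂ (cauchyTransform fun w => dbar φ w • f w) a := by
  refine differentiableAt_cauchyTransform_of_eventuallyEq_zero hi ?_
  filter_upwards [dbar_eventuallyEq ha] with z hz
  simp [hz, dbar_const]

theorem differentiableAt_vitushkinLocalization_of_notMem_tsupport {a : ℂ}
    (hi : Integrable fun w => dbar φ w • f w) (ha : a ∉ tsupport φ) :
    DifferentiableAt ℂ (vitushkinLocalization φ f) a := by
  rw [notMem_tsupport_iff_eventuallyEq] at ha
  refine (differentiableAt_cauchyTransform_dbar_smul hi ha).neg.congr_of_eventuallyEq ?_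
  filter_upwards [ha] with z hz
  simp [vitushkinLocalization, hz]

theorem differentiableAt_vitushkinLocalization_of_analyticAt [CompleteSpace E] {a : ℂ}
    (hi : Integrable fun w => dbar φ w • f w) (hφ : ContDiffAt ℝ 2 φ a) (hf : AnalyticAt ℂ f a) :
    DifferentiableAt ℂ (vitushkinLocalization φ f) a := by
  have hfR : ContDiffAt ℝ 1 f a := hf.contDiffAt.restrict_scalars ℝ
  have hφ_diff : DifferentiableAt ℝ φ a := hφ.differentiableAt two_ne_zero
  have hf_diff : DifferentiableAt ℝ f a := hfR.differentiableAt one_ne_zero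
  obtain ⟨C_diff, dbar_C⟩ := differentiableAt_and_dbar_cauchyTransform_of_contDiffAt hi
    ((contDiffAt_dbar hφ (by norm_num)).smul hfR)
  have dbar_f : dbar f a = 0 :=
    (differentiableAt_complex_iff_dbar_eq_zero.1 hf.differentiableAt).2
  refine differentiableAt_complex_iff_dbar_eq_zero.2 ⟨(hφ_diff.fun_smul hf_diff).sub C_diff, ?_⟩
  calc dbar (vitushkinLocalization φ f) a
      = φ a • dbar f a + dbar φ a • f a - dbar φ a • f a := by
        rw [← dbar_smul hφ_diff hf_diff, ← dbar_C, ← dbar_sub (hφ_diff.fun_smul hf_diff) C_diff]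
        rfl
    _ = 0 := by rw [dbar_f, smul_zero, zero_add, sub_self]

theorem differentiableAt_sub_vitushkinLocalization {a : ℂ}
    (hi : Integrable fun w => dbar φ w • f w) (ha : φ =ᶠ[𝓝 a] 1) :
    DifferentiableAt ℂ (fun z => f z - vitushkinLocalization φ f z) a := by
  refine (differentiableAt_cauchyTransform_dbar_smul hi ha).congr_of_eventuallyEq ?_
  filter_upwards [ha] with z hz
  simp [vitushkinLocalization, hz]

theorem exists_continuous_differentiableAt_sub [CompleteSpace E] {L : Set ℂ} (hU : IsOpen U)
    (hL : IsClosed L) (hf : ContinuousOn f U) (hd : DifferentiableOn ℂ f (U \ L)) {a : ℂ}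
    (ha : a ∈ U) :
    ∃ M ⊆ L, IsCompact M ∧ ∃ g : ℂ → E, Continuous g ∧ DifferentiableOn ℂ g Mᶜ ∧
      Tendsto g (cocompact ℂ) (𝓝 0) ∧ DifferentiableAt ℂ (fun z => f z - g z) a := by
  obtain ⟨φ, hφ, hs, hsub, hφ_one⟩ :=
    exists_contDiff_eventuallyEq_one ℂ (hU.mem_nhds ha) (n := 2)
  have hφ_C1 : ContDiff ℝ 1 φ := hφ.of_le one_le_two
  have hi : Integrable fun w => dbar φ w • f w :=
    (continuous_dbar_smul hU hφ_C1 hsub hf).integrable_of_hasCompactSupport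
      (hasCompactSupport_dbar_smul hs)
  refine ⟨L ∩ tsupport φ, inter_subset_left, hs.isCompact.inter_left hL,
    vitushkinLocalization φ f, continuous_vitushkinLocalization hU hφ_C1 hs hsub hf, fun z hz => ?_,
    tendsto_vitushkinLocalization_cocompact hs hi,
    differentiableAt_sub_vitushkinLocalization hi hφ_one⟩
  refine DifferentiableAt.differentiableWithinAt ?_
  by_cases hz_supp : z ∈ tsupport φ
  · have hzUL : U \ L ∈ 𝓝 z := (hU.sdiff hL).mem_nhds ⟨hsub hz_supp, fun hzL => hz ⟨hzL, hz_supp⟩⟩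
    exact differentiableAt_vitushkinLocalization_of_analyticAt hi hφ.contDiffAt (hd.analyticAt hzUL)
  · exact differentiableAt_vitushkinLocalization_of_notMem_tsupport hi hz_supp

end VitushkinLocalization

/-- Let `L ⊆ ℂ` be closed. Then for every compact `M ⊆ L` every function continuous
on `ℂ`, holomorphic off `M`, with a finite limit at infinity is constant (i.e.
`a(L) = 0`) if and only if for every open `U ⊆ ℂ` every function continuous on `U`
and holomorphic on `U \ L` is holomorphic on `U`. -/
theorem continuousAnalyticCapacity_zero_iff_removable_closed
    (L : Set ℂ) (hL : IsClosed L) :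
    (∀ M : Set ℂ, IsCompact M → M ⊆ L →
      ∀ f : ℂ → ℂ, Continuous f → DifferentiableOn ℂ f Mᶜ →
        (∃ c : ℂ, Tendsto f (cocompact ℂ) (nhds c)) → ∀ z w : ℂ, f z = f w) ↔
    (∀ U : Set ℂ, IsOpen U →
      ∀ f : ℂ → ℂ, ContinuousOn f U → DifferentiableOn ℂ f (U \ L) →
        DifferentiableOn ℂ f U) := by
  constructor
  · intro const_of_compact U hU f hf hd a ha
    obtain ⟨M, hML, hM, g, hg, hgd, hg_lim, hfg⟩ :=
      exists_continuous_differentiableAt_sub hU hL hf hd ha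
    have g_const (z : ℂ) : g z = g a := const_of_compact M hM hML g hg hgd ⟨0, hg_lim⟩ z a
    have hf_diff : DifferentiableAt ℂ f a := by
      simpa only [g_const, sub_add_cancel] using hfg.add_const (g a)
    exact hf_diff.differentiableWithinAt
  · rintro removable M - hML f hf hd ⟨c, hc⟩ z w
    have hf_entire : Differentiable ℂ f := differentiableOn_univ.1 <|
      removable univ isOpen_univ f hf.continuousOn (hd.mono fun _ hx hxM => hx.2 (hML hxM))
    rw [hf_entire.apply_eq_of_tendsto_cocompact z hc, hf_entire.apply_eq_of_tendsto_cocompact w hc]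
end
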